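/- Let (S,T) be modular data on Φ, let τ be a ring automorphism of ℂ that commutes with complex conjugation, and let g be a permutation of Φ and ε : Φ → {1,-1} signs such that τ(S_{ab}) = ε(a) S_{ga,b} = ε(b) S_{a,gb} for all a, b ∈ Φ. Then every modular invariant M satisfies M_{ab} = ε(a) ε(b) M_{ga,gb} for all a, b ∈ Φ; in particular M_{ga,gb} = M_{ab} for all a, b, and M_{ab} ≠ 0 implies ε(a) = ε(b). -/

import Mathlib

open scoped BigOperators
open Complex

/-- Modular data on a finite set `Φ` with distinguished element `zero`: a unitary symmetric
matrix `S`, a diagonal matrix `T` of finite order, with the `zero`-row of `S` real and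
strictly positive, `S² = (ST)³`, and nonnegative-integer fusion coefficients `N a b c` given
by Verlinde's formula. -/
structure ModularData (Φ : Type) [Fintype Φ] [DecidableEq Φ] where
  zero : Φ
  S : Matrix Φ Φ ℂ
  T : Matrix Φ Φ ℂ
  N : Φ → Φ → Φ → ℕ
  S_unitary : S * S.conjTranspose = 1
  S_symm : ∀ a b, S a b = S b a
  T_diag : ∀ a b, a ≠ b → T a b = 0
  T_order : ∃ m : ℕ, 0 < m ∧ T ^ m = 1
  S_zero_pos : ∀ a, (S zero a).im = 0 ∧ 0 < (S zero a).re
  modular_rel : S ^ 2 = (S * T) ^ 3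
  verlinde : ∀ a b c,
    (N a b c : ℂ) = ∑ d, S a d * S b d * (starRingEnd ℂ) (S c d) / S zero d

/-- A modular invariant for modular data `(S,T)`: a matrix of nonnegative integers commuting
(after casting to `ℂ`) with `S` and `T`, and with `M 0 0 = 1`. -/
def IsModularInvariant {Φ : Type} [Fintype Φ] [DecidableEq Φ] (M : ModularData Φ)
    (Z : Matrix Φ Φ ℕ) : Prop :=
  (Z.map (fun n => (n : ℂ))) * M.S = M.S * (Z.map (fun n => (n : ℂ))) ∧
  (Z.map (fun n => (n : ℂ))) * M.T = M.T * (Z.map (fun n => (n : ℂ))) ∧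
  Z M.zero M.zero = 1

/-!
Since `S` is unitary and commutes with `Z`, we have `Z = S Z Sᴴ`. Apply `τ` to this identity: the
integer matrix `Z` is unchanged, while `S` becomes `D · gS`, where `D = diag(ε)` and `gS` is `S`
with its rows reindexed by `g`. Hence `Z = D · (gS) Z (gS)ᴴ · Dᴴ`, and the middle factor is
`S Z Sᴴ = Z` with both indices moved by `g`. As the entries of `Z` are nonnegative, a factor
`ε(a) ε(b) = -1` forces `Z_{ab} = Z_{ga,gb} = 0`.
-/

section GaloisSymmetry

open Matrix

variable {Φ Ψ R : Type*}

theorem map_eq_diagonal_mul_submatrix [Fintype Φ] [DecidableEq Φ] [NonAssocSemiring R]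
    {S : Matrix Φ Ψ R} {τ : R → R} {g : Φ → Φ} {ε : Φ → R}
    (hτS : ∀ a b, τ (S a b) = ε a * S (g a) b) :
    S.map τ = diagonal ε * S.submatrix g id := by
  ext a b
  simp only [map_apply, diagonal_mul, submatrix_apply, id_eq, hτS]

theorem eq_diagonal_mul_submatrix_mul_of_commute [Fintype Φ] [DecidableEq Φ] [Semiring R]
    [StarRing R] {S Z : Matrix Φ Φ R} (hS : S * Sᴴ = 1) (hZS : Commute Z S) {τ : R →+* R}
    (hτstar : ∀ z, τ (star z) = star (τ z)) (hτZ : Z.map τ = Z) {g : Φ → Φ} {ε : Φ → R}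
    (hτS : ∀ a b, τ (S a b) = ε a * S (g a) b) :
    Z = diagonal ε * Z.submatrix g g * (diagonal ε)ᴴ := by
  have hconj : S * Z * Sᴴ = Z := by
    rw [← hZS.eq, Matrix.mul_assoc, hS, Matrix.mul_one]
  have hτS_row : S.map τ = diagonal ε * S.submatrix g id := map_eq_diagonal_mul_submatrix hτS
  calc
    Z = (S * Z * Sᴴ).map τ := by rw [hconj, hτZ]
    _ = S.map τ * Z * (S.map τ)ᴴ := by
      rw [Matrix.map_mul, Matrix.map_mul, hτZ, conjTranspose_map τ hτstar]
    _ = diagonal ε * (S.submatrix g id * Z * (S.submatrix g id)ᴴ) * (diagonal ε)ᴴ := by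
      simp only [hτS_row, conjTranspose_mul, Matrix.mul_assoc]
    _ = diagonal ε * (S * Z * Sᴴ).submatrix g g * (diagonal ε)ᴴ := rfl
    _ = diagonal ε * Z.submatrix g g * (diagonal ε)ᴴ := by rw [hconj]

theorem eq_and_sign_eq_one_of_natCast_eq_sign_mul [Ring R] [CharZero R] {s : R}
    (hs : s = 1 ∨ s = -1) {m n : ℕ} (h : (m : R) = s * n) : n = m ∧ (m ≠ 0 → s = 1) := by
  rcases hs with rfl | rfl
  · rw [one_mul, Nat.cast_inj] at h
    exact ⟨h.symm, fun _ => rfl⟩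
  · have hsum : m + n = 0 := by
      rw [neg_one_mul, eq_neg_iff_add_eq_zero] at h
      exact_mod_cast h
    obtain ⟨rfl, rfl⟩ := Nat.add_eq_zero_iff.mp hsum
    exact ⟨rfl, fun h0 => absurd rfl h0⟩

theorem modularData_galois_invariant_general [Fintype Φ] [DecidableEq Φ] [Ring R] [StarRing R]
    [CharZero R] {S : Matrix Φ Φ R} (hS : S * Sᴴ = 1) {τ : R →+* R}
    (hτstar : ∀ z, τ (star z) = star (τ z)) {g : Φ → Φ} {ε : Φ → R}
    (hε : ∀ a, ε a = 1 ∨ ε a = -1) (hτS : ∀ a b, τ (S a b) = ε a * S (g a) b)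
    {Z : Matrix Φ Φ ℕ} (hZS : Commute (Z.map (fun n => (n : R))) S) :
    (∀ a b, (Z a b : R) = ε a * ε b * (Z (g a) (g b) : R)) ∧
    (∀ a b, Z (g a) (g b) = Z a b) ∧
    (∀ a b, Z a b ≠ 0 → ε a = ε b) := by
  have hτZ : (Z.map (fun n => (n : R))).map τ = Z.map (fun n => (n : R)) := by
    ext a b
    exact map_natCast τ (Z a b)
  have hstarε (a : Φ) : star (ε a) = ε a := by rcases hε a with h | h <;> simp [h]
  have hsign (a b : Φ) : ε a * ε b = 1 ∨ ε a * ε b = -1 := by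
    rcases hε a with ha | ha <;> rcases hε b with hb | hb <;> simp [ha, hb]
  have hsq (b : Φ) : ε b * ε b = 1 := by rcases hε b with h | h <;> simp [h]
  have hZ (a b : Φ) : (Z a b : R) = ε a * ε b * (Z (g a) (g b) : R) := by
    have hentry :=
      congrFun₂ (eq_diagonal_mul_submatrix_mul_of_commute hS hZS hτstar hτZ hτS) a b
    simp only [diagonal_conjTranspose, mul_diagonal, diagonal_mul, map_apply, submatrix_apply,
      Pi.star_apply, hstarε] at hentry
    rw [hentry, mul_assoc, (Nat.cast_commute _ (ε b)).eq, ← mul_assoc]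
  have hcompare (a b : Φ) : Z (g a) (g b) = Z a b ∧ (Z a b ≠ 0 → ε a * ε b = 1) :=
    eq_and_sign_eq_one_of_natCast_eq_sign_mul (hsign a b) (hZ a b)
  refine ⟨hZ, fun a b => (hcompare a b).1, fun a b hab => ?_⟩
  calc
    ε a = ε a * ε b * ε b := by rw [mul_assoc, hsq, mul_one]
    _ = ε b := by rw [(hcompare a b).2 hab, one_mul]

end GaloisSymmetry

/-- Let `τ` be a ring automorphism of `ℂ` commuting with complex
conjugation, with associated Galois permutation `g` and signs `ε` satisfying
`τ (S_{ab}) = ε(a) S_{ga,b} = ε(b) S_{a,gb}`. Then every modular invariant `Z` satisfies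
`Z_{ab} = ε(a) ε(b) Z_{ga,gb}`; in particular `Z_{ga,gb} = Z_{ab}`, and `Z_{ab} ≠ 0` implies
`ε(a) = ε(b)`. -/
theorem modularData_galois_invariant
    {Φ : Type} [Fintype Φ] [DecidableEq Φ] (M : ModularData Φ)
    (τ : ℂ ≃+* ℂ) (hτconj : ∀ z, τ ((starRingEnd ℂ) z) = (starRingEnd ℂ) (τ z))
    (g : Equiv.Perm Φ) (ε : Φ → ℂ) (hε : ∀ a, ε a = 1 ∨ ε a = -1)
    (hτS : ∀ a b, τ (M.S a b) = ε a * M.S (g a) b ∧ τ (M.S a b) = ε b * M.S a (g b))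
    (Z : Matrix Φ Φ ℕ) (hZ : IsModularInvariant M Z) :
    (∀ a b, (Z a b : ℂ) = ε a * ε b * (Z (g a) (g b) : ℂ)) ∧
    (∀ a b, Z (g a) (g b) = Z a b) ∧
    (∀ a b, Z a b ≠ 0 → ε a = ε b) :=
  modularData_galois_invariant_general M.S_unitary (τ := τ.toRingHom) hτconj hε
    (fun a b => (hτS a b).1) hZ.1
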